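/- Every term of the semigroup L is provably equal, using only associativity of concatenation and the axiom ↰n;X = ↰n, to a first canonical L-form; this first canonical L-form is obtained by deleting all instructions strictly to the right of the leftmost repeat instruction if a repeat instruction occurs, and is the term itself otherwise. In particular every L-term is provably equal to a term containing at most one repeat instruction. -/

import Mathlib

/-- Primitive instructions over a set `A` of basic instructions:
basic instructions `a`, positive tests `+a`, negative tests `-a`,
jump instructions `#k` and the termination instruction `!`. -/
inductive PrimInstr (A : Type) : Type where
  | basic (a : A)
  | pos (a : A)
  | neg (a : A)
  | jump (k : Nat)
  | halt
deriving DecidableEq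

/-- Instructions of the semigroup `L`: primitive instructions and
repeat instructions (repeaters) `↰n`.  (Genuine repeaters have `n ≥ 1`;
this is imposed as a hypothesis wherever relevant.) -/
inductive Instr (A : Type) : Type where
  | prim (u : PrimInstr A)
  | rep (n : Nat)
deriving DecidableEq

/-- Is this instruction a repeater? -/
def Instr.isRep {A : Type} : Instr A → Bool
  | .rep _ => true
  | .prim _ => false

/-- `↰n` is a genuine repeat instruction only for `n ≥ 1`. -/
def Instr.valid {A : Type} : Instr A → Prop
  | .prim _ => True
  | .rep n => 1 ≤ n

/-- Terms of the semigroup `L`: finite nonempty sequences of instructions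
under (associative) concatenation. -/
inductive LTerm (A : Type) : Type where
  | instr (i : Instr A)
  | seq (s t : LTerm A)
deriving DecidableEq

/-- The (nonempty) sequence of instructions an `L`-term consists of. -/
def LTerm.flat {A : Type} : LTerm A → List (Instr A)
  | .instr i => [i]
  | .seq s t => s.flat ++ t.flat

/-- Equational-logic derivability in the semigroup `L` from associativity of
concatenation and the axiom `↰n ; X = ↰n` alone. -/
inductive DerivL0 {A : Type} : LTerm A → LTerm A → Prop
  | refl (t : LTerm A) : DerivL0 t t
  | symm {s t : LTerm A} : DerivL0 s t → DerivL0 t s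
  | trans {s t u : LTerm A} : DerivL0 s t → DerivL0 t u → DerivL0 s u
  | seq_congr {s s' t t' : LTerm A} : DerivL0 s s' → DerivL0 t t' → DerivL0 (s.seq t) (s'.seq t')
  | assoc (s t u : LTerm A) : DerivL0 ((s.seq t).seq u) (s.seq (t.seq u))
  | rep_absorb (n : ℕ) (hn : 1 ≤ n) (t : LTerm A) :
      DerivL0 ((LTerm.instr (.rep n)).seq t) (.instr (.rep n))

/-- The first canonical `L`-form of an instruction sequence starting with `i`
and continuing with `l`: everything strictly to the right of the leftmost
repeat instruction (if any) is deleted. -/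
def truncTerm {A : Type} : Instr A → List (Instr A) → LTerm A
  | i, [] => .instr i
  | i, j :: l => if i.isRep then .instr i else (LTerm.instr i).seq (truncTerm j l)

theorem trunc_append {A : Type} (j : Instr A) (m : List (Instr A)) :
    ∀ (l : List (Instr A)) (i : Instr A), (∀ x ∈ i :: l, x.valid) →
    DerivL0 ((truncTerm i l).seq (truncTerm j m)) (truncTerm i (l ++ j :: m)) := by
  intro l
  induction l with
  | nil =>
    intro i h
    cases i with
    | prim u => exact DerivL0.refl _
    | rep n => exact DerivL0.rep_absorb n (h (.rep n) (by simp)) _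
  | cons k l ih =>
    intro i h
    cases i with
    | prim u =>
      exact (DerivL0.assoc _ _ _).trans ((DerivL0.refl _).seq_congr
        (ih k (fun x hx => h x (List.mem_cons_of_mem _ hx))))
    | rep n => exact DerivL0.rep_absorb n (h (.rep n) (by simp)) _

theorem flat_ne_nil {A : Type} (t : LTerm A) : t.flat ≠ [] := by
  induction t with
  | instr i => simp [LTerm.flat]
  | seq s t ihs iht => simp [LTerm.flat, ihs]

theorem deriv_trunc {A : Type} (t : LTerm A) : (∀ i ∈ t.flat, i.valid) →
    ∀ i l, t.flat = i :: l → DerivL0 t (truncTerm i l) := by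
  induction t with
  | instr i =>
    intro _ j l h
    simp only [LTerm.flat, List.cons.injEq] at h
    obtain ⟨rfl, rfl⟩ := h
    exact DerivL0.refl _
  | seq s t ihs iht =>
    intro hv i l h
    obtain ⟨a, p, hs⟩ := List.exists_cons_of_ne_nil (flat_ne_nil s)
    obtain ⟨b, q, ht⟩ := List.exists_cons_of_ne_nil (flat_ne_nil t)
    have hvs : ∀ i ∈ s.flat, i.valid := fun x hx => hv x (by simp [LTerm.flat, hx])
    have hvt : ∀ i ∈ t.flat, i.valid := fun x hx => hv x (by simp [LTerm.flat, hx])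
    simp only [LTerm.flat, hs, ht, List.cons_append, List.cons.injEq] at h
    obtain ⟨rfl, rfl⟩ := h
    exact ((ihs hvs _ _ hs).seq_congr (iht hvt _ _ ht)).trans
      (trunc_append b q p a (hs ▸ hvs))

theorem trunc_form {A : Type} : ∀ (l : List (Instr A)) (i : Instr A),
    (∀ x ∈ i :: l, x.valid) →
    ((∃ us : List (PrimInstr A), (truncTerm i l).flat = us.map Instr.prim) ∨
     (∃ (us : List (PrimInstr A)) (n : ℕ), 1 ≤ n ∧
        (truncTerm i l).flat = us.map Instr.prim ++ [Instr.rep n])) := by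
  intro l
  induction l with
  | nil =>
    intro i h
    cases i with
    | prim u => exact Or.inl ⟨[u], rfl⟩
    | rep n => exact Or.inr ⟨[], n, h (.rep n) (by simp), rfl⟩
  | cons k l ih =>
    intro i h
    cases i with
    | prim u =>
      have e : (truncTerm (Instr.prim u) (k :: l)).flat
        = Instr.prim u :: (truncTerm k l).flat := rfl
      rcases ih k (fun x hx => h x (List.mem_cons_of_mem _ hx)) with ⟨us, hu⟩ | ⟨us, n, hn, hu⟩
      · exact Or.inl ⟨u :: us, by rw [e, hu]; rfl⟩
      · exact Or.inr ⟨u :: us, n, hn, by rw [e, hu]; rfl⟩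
    | rep n => exact Or.inr ⟨[], n, h (.rep n) (by simp), rfl⟩

theorem count_prim {A : Type} (us : List (PrimInstr A)) :
    (us.map Instr.prim).countP Instr.isRep = 0 := by
  rw [List.countP_eq_zero]
  intro a ha
  obtain ⟨u, _, rfl⟩ := List.mem_map.1 ha
  simp [Instr.isRep]

/-- Every `L`-term is provably equal, using only associativity and the axiom
`↰n ; X = ↰n`, to its first canonical `L`-form, obtained by deleting all
instructions strictly to the right of the leftmost repeat instruction (and
being the term itself if no repeat instruction occurs); in particular the
canonical form contains at most one repeat instruction. -/
theorem first_canonical_L_form (A : Type) (t : LTerm A)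
    (hv : ∀ i ∈ t.flat, i.valid) (i : Instr A) (l : List (Instr A))
    (hflat : t.flat = i :: l) :
    DerivL0 t (truncTerm i l) ∧
    ((∃ us : List (PrimInstr A), (truncTerm i l).flat = us.map Instr.prim) ∨
     (∃ (us : List (PrimInstr A)) (n : ℕ), 1 ≤ n ∧
        (truncTerm i l).flat = us.map Instr.prim ++ [Instr.rep n])) ∧
    (truncTerm i l).flat.countP Instr.isRep ≤ 1 := by
  have hf := trunc_form l i (hflat ▸ hv)
  refine ⟨deriv_trunc t hv i l hflat, hf, ?_⟩
  rcases hf with ⟨us, hu⟩ | ⟨us, n, hn, hu⟩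
  · rw [hu, count_prim]; exact Nat.zero_le _
  · rw [hu, List.countP_append, count_prim]; simp [Instr.isRep]
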